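/- Let Q ∈ ℂ^{2d×2d} be symmetric, F = J Q, and let S be the singular space of Q. Then (Re F)·S = {0}, (Im F)·S ⊆ S, and for every t ∈ ℝ the linear map exp(−2 t Im F) maps S bijectively onto itself: exp(−2 t Im F)·S = S. -/

import Mathlib

open Matrix Complex

namespace Stmt10

/-- The standard symplectic matrix `J = [[0, I],[−I, 0]]` on `ℂ^{2d} = ℂ^d ⊕ ℂ^d`. -/
noncomputable def J (d : ℕ) : Matrix (Fin d ⊕ Fin d) (Fin d ⊕ Fin d) ℂ :=
  Matrix.fromBlocks 0 1 (-1) 0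

/-- The singular space of a symmetric `Q ∈ ℂ^{2d×2d}` with Hamilton map `F = J Q`:
`S = { X ∈ ℝ^{2d} : Re F (Im F)^j X = 0 for 0 ≤ j ≤ 2d−1 }`. -/
def singularSpace (d : ℕ) (Q : Matrix (Fin d ⊕ Fin d) (Fin d ⊕ Fin d) ℂ) :
    Set (Fin d ⊕ Fin d → ℝ) :=
  {X | ∀ j : ℕ, j ≤ 2 * d - 1 →
    (((J d * Q).map Complex.re) * ((J d * Q).map Complex.im) ^ j).mulVec X = 0}

theorem mem_all (d : ℕ) (Q : Matrix (Fin d ⊕ Fin d) (Fin d ⊕ Fin d) ℂ)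
    (X : Fin d ⊕ Fin d → ℝ) (hX : X ∈ singularSpace d Q) (j : ℕ) :
    (((J d * Q).map Complex.re) * ((J d * Q).map Complex.im) ^ j).mulVec X = 0 := by
  rcases Nat.eq_zero_or_pos d with h0 | hd
  · subst h0
    exact Subsingleton.elim _ _
  have hX' : ∀ j : ℕ, j ≤ 2 * d - 1 →
    (((J d * Q).map Complex.re) * ((J d * Q).map Complex.im) ^ j).mulVec X = 0 := hX
  generalize (J d * Q).map Complex.re = R at *
  generalize (J d * Q).map Complex.im = M at *
  rw [Matrix.pow_eq_aeval_mod_charpoly, Polynomial.aeval_eq_sum_range, Finset.mul_sum,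
    Matrix.sum_mulVec]
  refine Finset.sum_eq_zero fun i hi => ?_
  rw [Matrix.mul_smul, Matrix.smul_mulVec]
  have hdeg : (Polynomial.X ^ j %ₘ M.charpoly).natDegree < M.charpoly.natDegree := by
    apply Polynomial.natDegree_modByMonic_lt _ M.charpoly_monic
    intro h
    have h2 := M.charpoly_natDegree_eq_dim
    rw [h] at h2
    simp at h2
    omega
  rw [M.charpoly_natDegree_eq_dim] at hdeg
  simp at hdeg hi
  rw [hX' i (by omega), smul_zero]

open scoped Matrix.Norms.Operator in
theorem exp_mem (d : ℕ) (Q : Matrix (Fin d ⊕ Fin d) (Fin d ⊕ Fin d) ℂ)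
    (X : Fin d ⊕ Fin d → ℝ) (hX : X ∈ singularSpace d Q) (c : ℝ) :
    (NormedSpace.exp (c • ((J d * Q).map Complex.im))).mulVec X ∈ singularSpace d Q := by
  intro j _
  have hX' := mem_all d Q X hX
  generalize (J d * Q).map Complex.re = R at *
  generalize (J d * Q).map Complex.im = M at *
  have hs := NormedSpace.exp_series_hasSum_exp' (𝕂 := ℝ) (c • M)
  let L : Matrix (Fin d ⊕ Fin d) (Fin d ⊕ Fin d) ℝ →+ (Fin d ⊕ Fin d → ℝ) :=
    { toFun := fun A => (R * M ^ j).mulVec (A.mulVec X)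
      map_zero' := by simp
      map_add' := fun A B => by simp [Matrix.add_mulVec, Matrix.mulVec_add] }
  have hL : Continuous L := by
    change Continuous fun A : Matrix (Fin d ⊕ Fin d) (Fin d ⊕ Fin d) ℝ =>
      (R * M ^ j).mulVec (A.mulVec X)
    fun_prop
  have h1 := hs.map L hL
  have h2 : (L ∘ fun n : ℕ => ((n.factorial : ℝ)⁻¹) • (c • M) ^ n) = fun _ => 0 := by
    funext n
    change (R * M ^ j).mulVec ((((n.factorial : ℝ)⁻¹) • (c • M) ^ n).mulVec X) = 0
    rw [smul_pow, Matrix.smul_mulVec, Matrix.smul_mulVec, Matrix.mulVec_smul,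
      Matrix.mulVec_smul, Matrix.mulVec_mulVec, Matrix.mul_assoc, ← pow_add, hX', smul_zero,
      smul_zero]
  rw [h2] at h1
  exact h1.unique hasSum_zero

/-- stability properties of the singular space.  Let `Q ∈ ℂ^{2d×2d}` be
symmetric with Hamilton map `F = J Q` and singular space `S`.  Then `(Re F) S = {0}`,
`(Im F) S ⊆ S`, and for every `t ∈ ℝ`, `exp(−2t Im F) S = S`. -/
theorem stmt_10 (d : ℕ) (Q : Matrix (Fin d ⊕ Fin d) (Fin d ⊕ Fin d) ℂ) (hQ : Q.IsSymm) :
    (∀ X ∈ singularSpace d Q, ((J d * Q).map Complex.re).mulVec X = 0) ∧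
    (∀ X ∈ singularSpace d Q,
      ((J d * Q).map Complex.im).mulVec X ∈ singularSpace d Q) ∧
    (∀ t : ℝ,
      (fun X => (NormedSpace.exp ((-(2 * t)) • ((J d * Q).map Complex.im))).mulVec X) ''
          singularSpace d Q
        = singularSpace d Q) := by
  refine ⟨fun X hX => ?_, fun X hX j _ => ?_, fun t => ?_⟩
  · simpa using mem_all d Q X hX 0
  · rw [Matrix.mulVec_mulVec, Matrix.mul_assoc, ← pow_succ]
    exact mem_all d Q X hX (j + 1)
  · apply Set.Subset.antisymm
    · rintro _ ⟨X, hX, rfl⟩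
      exact exp_mem d Q X hX _
    · intro X hX
      refine ⟨_, exp_mem d Q X hX (2 * t), ?_⟩
      change Matrix.mulVec _ _ = _
      rw [Matrix.mulVec_mulVec, ← Matrix.exp_add_of_commute, ← add_smul]
      · simp
      · exact ((Commute.refl _).smul_left _).smul_right _

end Stmt10
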